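/- Let A be a subalgebra of n×n complex matrices in which every element has at least one multiple eigenvalue, and let M ∈ A have the maximal number of distinct eigenvalues. Let λ be a multiple eigenvalue of M with generalized eigenspace E, and let P ∈ A be the projection onto E along the sum of the other generalized eigenspaces. Then for every N ∈ A, the endomorphism φ_N of E defined by φ_N(v) = PNv has a single eigenvalue. -/

import Mathlib

/-- Generalized eigenspace of an n×n matrix for an eigenvalue λ. -/
noncomputable def genE (n : ℕ) (M : Matrix (Fin n) (Fin n) ℂ) (lam : ℂ) :
    Submodule ℂ (Fin n → ℂ) :=
  LinearMap.ker (Matrix.mulVecLin ((M - lam • (1 : Matrix (Fin n) (Fin n) ℂ)) ^ n))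

/-- Sum of the generalized eigenspaces of M for values other than λ. -/
noncomputable def genF (n : ℕ) (M : Matrix (Fin n) (Fin n) ℂ) (lam : ℂ) :
    Submodule ℂ (Fin n → ℂ) :=
  ⨆ μ ≠ lam, genE n M μ

/-!
If `φ_N` had two eigenvalues `a ≠ b`, choose `c` with `a + c` and `b + c` outside the spectrum of
`M`. The element `M - MP + P(N + cP)P` of the algebra agrees with `M` on the eigenspaces for the
eigenvalues other than `λ` and with `φ_N + c` on `E`. So it trades at most the one eigenvalue `λ`
of `M` for the two new ones `a + c` and `b + c`, against the maximality of `M`.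
-/

open Module Module.End LinearMap

/-- The element acting as `f` on `ker p` and as `p * g` on `range p`, when `p` is a projection in
a ring of endomorphisms. It is written without `1 - p`, so as to stay inside non-unital
subalgebras. -/
def replaceBlock {R : Type*} [NonUnitalRing R] (f p g : R) : R :=
  f - f * p + p * g * p

theorem replaceBlock_mem {R S : Type*} [NonUnitalRing R] [SetLike S R] [AddSubgroupClass S R]
    [MulMemClass S R] {A : S} {f p g : R} (hf : f ∈ A) (hp : p ∈ A) (hg : g ∈ A) :
    replaceBlock f p g ∈ A :=
  add_mem (sub_mem hf (mul_mem hf hp)) (mul_mem (mul_mem hp hg) hp)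

section Compression

variable {R V : Type*} [CommRing R] [AddCommGroup V] [Module R V] {E : Submodule R V}
  {f p g : End R V} {μ : R}

/-- The compression `v ↦ p (g v)` of `g` to the image `E` of a projection `p`; this is the `φ_N`
of the theorem. -/
def compression (hp : IsProj E p) (g : End R V) : End R E :=
  hp.codRestrict ∘ₗ g ∘ₗ E.subtype

theorem hasEigenvalue_compression_iff (hp : IsProj E p) :
    (compression hp g).HasEigenvalue μ ↔ ∃ x ∈ E, x ≠ 0 ∧ p (g x) = μ • x := by
  constructor
  · intro h
    obtain ⟨x, hx⟩ := h.exists_hasEigenvector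
    exact ⟨x, x.2, fun h0 => hx.2 (Subtype.ext h0), congrArg Subtype.val hx.apply_eq_smul⟩
  · rintro ⟨x, hxE, hx0, hx⟩
    exact hasEigenvalue_of_hasEigenvector (x := ⟨x, hxE⟩)
      ⟨mem_eigenspace_iff.2 (Subtype.ext hx), fun h0 => hx0 (congrArg Subtype.val h0)⟩

theorem hasEigenvalue_compression_add_smul (hp : IsProj E p)
    (h : (compression hp g).HasEigenvalue μ) (c : R) :
    (compression hp (g + c • p)).HasEigenvalue (μ + c) := by
  rw [hasEigenvalue_compression_iff] at h ⊢
  obtain ⟨x, hxE, hx0, hx⟩ := h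
  refine ⟨x, hxE, hx0, ?_⟩
  rw [LinearMap.add_apply, LinearMap.smul_apply, map_add, map_smul, hp.map_id x hxE,
    hp.map_id x hxE, hx, add_smul]

theorem hasEigenvalue_replaceBlock_of_compression (hp : IsProj E p)
    (h : (compression hp g).HasEigenvalue μ) : (replaceBlock f p g).HasEigenvalue μ := by
  obtain ⟨x, hxE, hx0, hx⟩ := (hasEigenvalue_compression_iff hp).1 h
  refine hasEigenvalue_of_hasEigenvector (x := x) ⟨mem_eigenspace_iff.2 ?_, hx0⟩
  simp [replaceBlock, hp.map_id x hxE, hx]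

theorem hasEigenvalue_replaceBlock_of_eigenspace_le_ker (h : f.HasEigenvalue μ)
    (hp : f.eigenspace μ ≤ ker p) : (replaceBlock f p g).HasEigenvalue μ := by
  obtain ⟨x, hx⟩ := h.exists_hasEigenvector
  have hpx : p x = 0 := hp hx.1
  refine hasEigenvalue_of_hasEigenvector (x := x) ⟨mem_eigenspace_iff.2 ?_, hx.2⟩
  simp [replaceBlock, hpx, hx.apply_eq_smul]

end Compression

theorem isProj_of_codisjoint {R V : Type*} [Semiring R] [AddCommMonoid V] [Module R V]
    {E F : Submodule R V} {p : End R V} (h : Codisjoint E F) (hE : ∀ x ∈ E, p x = x)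
    (hF : ∀ x ∈ F, p x = 0) : IsProj E p where
  map_id := hE
  map_mem x := by
    obtain ⟨y, hy, z, hz, rfl⟩ := Submodule.mem_sup.1 (h.eq_top ▸ Submodule.mem_top (x := x))
    rwa [map_add, hE y hy, hF z hz, add_zero]

theorem ncard_lt_ncard_of_diff_union_pair_subset {α : Type*} {s t : Set α} {a b c : α}
    (ht : t.Finite) (hab : a ≠ b) (ha : a ∉ s) (hb : b ∉ s) (h : s \ {c} ∪ {a, b} ⊆ t) :
    s.ncard < t.ncard := by
  have hs : (s \ {c}).Finite := ht.subset (Set.subset_union_left.trans h)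
  have hdisj : Disjoint (s \ {c}) {a, b} := by
    rw [Set.disjoint_insert_right, Set.disjoint_singleton_right]
    exact ⟨fun h => ha h.1, fun h => hb h.1⟩
  calc
    s.ncard ≤ (s \ {c}).ncard + 1 := by
      have := Set.pred_ncard_le_ncard_sdiff_singleton s c
      lia
    _ < (s \ {c}).ncard + ({a, b} : Set α).ncard := by rw [Set.ncard_pair hab]; lia
    _ = (s \ {c} ∪ {a, b}).ncard := (Set.ncard_union_eq hdisj hs).symm
    _ ≤ t.ncard := Set.ncard_le_ncard h ht

theorem exists_add_notMem_of_finite {G : Type*} [AddGroup G] [Infinite G] {s : Set G}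
    (hs : s.Finite) (a b : G) : ∃ c, a + c ∉ s ∧ b + c ∉ s := by
  have hfin (x : G) : {c | x + c ∈ s}.Finite := hs.preimage (add_right_injective x).injOn
  obtain ⟨c, hc⟩ := ((hfin a).union (hfin b)).exists_notMem
  exact ⟨c, not_or.1 hc⟩

section FiniteDimensional

variable {K V : Type*} [Field K] [AddCommGroup V] [Module K V] [FiniteDimensional K V]
  {f p g : End K V} {lam : K}

theorem codisjoint_maxGenEigenspace_iSup_ne [IsAlgClosed K] (f : End K V) (lam : K) :
    Codisjoint (f.maxGenEigenspace lam) (⨆ μ ≠ lam, f.maxGenEigenspace μ) := by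
  rw [codisjoint_iff, ← iSup_split_single f.maxGenEigenspace lam, iSup_maxGenEigenspace_eq_top]

theorem spectrum_diff_singleton_subset_spectrum_replaceBlock
    (hker : ∀ μ ≠ lam, f.eigenspace μ ≤ ker p) :
    spectrum K f \ {lam} ⊆ spectrum K (replaceBlock f p g) := fun μ ⟨hμ, hne⟩ =>
  (hasEigenvalue_replaceBlock_of_eigenspace_le_ker (.of_mem_spectrum hμ) (hker μ hne)).mem_spectrum

theorem eq_of_hasEigenvalue_compression [Infinite K] {A : NonUnitalSubalgebra K (End K V)}
    (hf : f ∈ A) (hmax : ∀ g ∈ A, (spectrum K g).ncard ≤ (spectrum K f).ncard)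
    {E : Submodule K V} (hp : IsProj E p) (hpA : p ∈ A)
    (hker : ∀ μ ≠ lam, f.eigenspace μ ≤ ker p) (hg : g ∈ A) {a b : K}
    (ha : (compression hp g).HasEigenvalue a) (hb : (compression hp g).HasEigenvalue b) :
    a = b := by
  by_contra hab
  obtain ⟨c, hac, hbc⟩ := exists_add_notMem_of_finite (finite_spectrum f) a b
  have hshift {μ : K} (hμ : (compression hp g).HasEigenvalue μ) :
      μ + c ∈ spectrum K (replaceBlock f p (g + c • p)) :=
    (hasEigenvalue_replaceBlock_of_compression hp
      (hasEigenvalue_compression_add_smul hp hμ c)).mem_spectrum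
  have hlt := ncard_lt_ncard_of_diff_union_pair_subset
    (finite_spectrum (replaceBlock f p (g + c • p))) (mt add_right_cancel hab) hac hbc
    (Set.union_subset (spectrum_diff_singleton_subset_spectrum_replaceBlock hker)
      (Set.pair_subset (hshift ha) (hshift hb)))
  exact (hmax _ (replaceBlock_mem hf hpA (add_mem hg (SMulMemClass.smul_mem c hpA)))).not_gt hlt

theorem stmt8_general [IsAlgClosed K] (A : NonUnitalSubalgebra K (End K V)) (hf : f ∈ A)
    (hmax : ∀ g ∈ A, (spectrum K g).ncard ≤ (spectrum K f).ncard) (hlam : f.HasEigenvalue lam)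
    (hpA : p ∈ A) (hpE : ∀ x ∈ f.maxGenEigenspace lam, p x = x)
    (hpF : ∀ x ∈ ⨆ μ ≠ lam, f.maxGenEigenspace μ, p x = 0) :
    ∀ g ∈ A, ∃! μ : K, ∃ x ∈ f.maxGenEigenspace lam, x ≠ 0 ∧ p (g x) = μ • x := by
  intro g hg
  have hp : IsProj (f.maxGenEigenspace lam) p :=
    isProj_of_codisjoint (codisjoint_maxGenEigenspace_iSup_ne f lam) hpE hpF
  have hker : ∀ μ ≠ lam, f.eigenspace μ ≤ ker p := fun μ hμ x hx =>
    hpF x (le_iSup₂ (f := fun ν (_ : ν ≠ lam) => f.maxGenEigenspace ν) μ hμ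
      (eigenspace_le_maxGenEigenspace hx))
  have : Nontrivial (f.maxGenEigenspace lam) :=
    Submodule.nontrivial_iff_ne_bot.2 (ne_bot_of_le_ne_bot hlam eigenspace_le_maxGenEigenspace)
  simp only [← hasEigenvalue_compression_iff hp]
  exact existsUnique_of_exists_of_unique (exists_eigenvalue (compression hp g)) fun _ _ =>
    eq_of_hasEigenvalue_compression hf hmax hp hpA hker hg

end FiniteDimensional

section Matrix

open Matrix

theorem card_toFinset_roots_charpoly {K ι : Type*} [Field K] [DecidableEq K] [Fintype ι]
    [DecidableEq ι] (M : Matrix ι ι K) :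
    M.charpoly.roots.toFinset.card = (spectrum K (toLin' M)).ncard := by
  rw [← Set.ncard_coe_finset]
  congr 1 with μ
  rw [spectrum_toLin', Matrix.mem_spectrum_iff_isRoot_charpoly, Finset.mem_coe,
    Multiset.mem_toFinset, Polynomial.mem_roots M.charpoly_monic.ne_zero]

theorem hasEigenvalue_toLin'_iff_rootMultiplicity_pos {R ι : Type*} [CommRing R] [IsDomain R]
    [Fintype ι] [DecidableEq ι] {M : Matrix ι ι R} {μ : R} :
    HasEigenvalue (toLin' M) μ ↔ 0 < M.charpoly.rootMultiplicity μ := by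
  rw [hasEigenvalue_iff_isRoot_charpoly, charpoly_toLin',
    Polynomial.rootMultiplicity_pos M.charpoly_monic.ne_zero]

theorem genE_eq_maxGenEigenspace (n : ℕ) (M : Matrix (Fin n) (Fin n) ℂ) (μ : ℂ) :
    genE n M μ = maxGenEigenspace (toLin' M) μ := by
  rw [maxGenEigenspace_eq_genEigenspace_finrank, genEigenspace_nat, finrank_fin_fun, genE,
    ← toLin'_apply', toLin'_pow, map_sub, map_smul, toLin'_one]
  rfl

theorem genF_eq_iSup_maxGenEigenspace (n : ℕ) (M : Matrix (Fin n) (Fin n) ℂ) (lam : ℂ) :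
    genF n M lam = ⨆ μ ≠ lam, maxGenEigenspace (toLin' M) μ := by
  simp only [genF, genE_eq_maxGenEigenspace]

end Matrix

/-- If every element of A has a multiple eigenvalue, M ∈ A has a maximal
number of distinct eigenvalues, λ is a multiple eigenvalue of M with
generalized eigenspace E and P ∈ A the projection onto E along the rest,
then for every N ∈ A the endomorphism φ_N : v ↦ PNv of E has a single
eigenvalue. -/
theorem stmt8 (n : ℕ) (A : Subalgebra ℂ (Matrix (Fin n) (Fin n) ℂ))
    (hmult : ∀ N ∈ A, ∃ μ : ℂ, 2 ≤ (Matrix.charpoly N).rootMultiplicity μ)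
    (M : Matrix (Fin n) (Fin n) ℂ) (hM : M ∈ A)
    (hmax : ∀ N ∈ A, (Matrix.charpoly N).roots.toFinset.card ≤
        (Matrix.charpoly M).roots.toFinset.card)
    (lam : ℂ) (hlam : 2 ≤ (Matrix.charpoly M).rootMultiplicity lam)
    (P : Matrix (Fin n) (Fin n) ℂ) (hPA : P ∈ A)
    (hP1 : ∀ x ∈ genE n M lam, P.mulVec x = x)
    (hP2 : ∀ x ∈ genF n M lam, P.mulVec x = 0) :
    ∀ N ∈ A, ∃! μ : ℂ, ∃ x ∈ genE n M lam, x ≠ 0 ∧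
      P.mulVec (N.mulVec x) = μ • x := by
  simp only [genE_eq_maxGenEigenspace, genF_eq_iSup_maxGenEigenspace,
    card_toFinset_roots_charpoly] at hmax hP1 hP2 ⊢
  exact fun N hN =>
    stmt8_general (A.map Matrix.toLinAlgEquiv'.toAlgHom).toNonUnitalSubalgebra ⟨M, hM, rfl⟩
      (Set.forall_mem_image.2 hmax)
      (hasEigenvalue_toLin'_iff_rootMultiplicity_pos.2 (two_pos.trans_le hlam))
      ⟨P, hPA, rfl⟩ hP1 hP2 _ ⟨N, hN, rfl⟩
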